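/- arXiv:1006.3501 — 5 statements merged into one kernel-verified Lean document; each statement's English description precedes it below -/
import Mathlib

section
/- Let C be a spherical pivotal category. For all tuples S, T of signed objects of C, ω_{TS} ∘ (σ_{X_{T*}, X_{S*}} ⊗ σ_{X_S, X_T}) = ω_{ST} as maps Hom(𝟙, X_{T*} ⊗ X_{S*}) ⊗ Hom(𝟙, X_S ⊗ X_T) → End(𝟙), under the identifications X_{(ST)*} = X_{T*} ⊗ X_{S*} and X_{ST} = X_S ⊗ X_T. -/
open CategoryTheory CategoryTheory.Limits MonoidalCategory

universe v u w

/-- A pivotal category: a monoidal category in which every object is equipped with a dual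
object and with evaluation/coevaluation morphisms forming a left duality and a right
duality, such that left and right duals of morphisms coincide, the left and right
monoidal constraints coincide, and the left and right evaluations of the unit coincide. -/
class PivotalCat (C : Type u) [Category.{v} C] [MonoidalCategory C] where
  dual : C → C
  evl : ∀ X : C, dual X ⊗ X ⟶ 𝟙_ C
  coevl : ∀ X : C, 𝟙_ C ⟶ X ⊗ dual X
  evr : ∀ X : C, X ⊗ dual X ⟶ 𝟙_ C
  coevr : ∀ X : C, 𝟙_ C ⟶ dual X ⊗ X
  left_zigzag₁ : ∀ X : C,
    (λ_ X).inv ≫ (coevl X ▷ X) ≫ (α_ X (dual X) X).hom ≫ (X ◁ evl X) ≫ (ρ_ X).hom = 𝟙 X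
  left_zigzag₂ : ∀ X : C,
    (ρ_ (dual X)).inv ≫ (dual X ◁ coevl X) ≫ (α_ (dual X) X (dual X)).inv ≫
      (evl X ▷ dual X) ≫ (λ_ (dual X)).hom = 𝟙 (dual X)
  right_zigzag₁ : ∀ X : C,
    (ρ_ X).inv ≫ (X ◁ coevr X) ≫ (α_ X (dual X) X).inv ≫ (evr X ▷ X) ≫ (λ_ X).hom = 𝟙 X
  right_zigzag₂ : ∀ X : C,
    (λ_ (dual X)).inv ≫ (coevr X ▷ dual X) ≫ (α_ (dual X) X (dual X)).hom ≫
      (dual X ◁ evr X) ≫ (ρ_ (dual X)).hom = 𝟙 (dual X)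
  ldual_eq_rdual : ∀ {X Y : C} (f : X ⟶ Y),
    (ρ_ (dual Y)).inv ≫ (dual Y ◁ coevl X) ≫ (dual Y ◁ (f ▷ dual X)) ≫
      (α_ (dual Y) Y (dual X)).inv ≫ (evl Y ▷ dual X) ≫ (λ_ (dual X)).hom =
    (λ_ (dual Y)).inv ≫ (coevr X ▷ dual Y) ≫ ((dual X ◁ f) ▷ dual Y) ≫
      (α_ (dual X) Y (dual Y)).hom ≫ (dual X ◁ evr Y) ≫ (ρ_ (dual X)).hom
  constraint_eq : ∀ X Y : C,
    (ρ_ (dual X ⊗ dual Y)).inv ≫ ((dual X ⊗ dual Y) ◁ coevl (Y ⊗ X)) ≫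
      (α_ (dual X) (dual Y) ((Y ⊗ X) ⊗ dual (Y ⊗ X))).hom ≫
      (dual X ◁ (α_ (dual Y) (Y ⊗ X) (dual (Y ⊗ X))).inv) ≫
      (dual X ◁ (((α_ (dual Y) Y X).inv ≫ (evl Y ▷ X) ≫ (λ_ X).hom) ▷ dual (Y ⊗ X))) ≫
      (α_ (dual X) X (dual (Y ⊗ X))).inv ≫ (evl X ▷ dual (Y ⊗ X)) ≫ (λ_ (dual (Y ⊗ X))).hom =
    (λ_ (dual X ⊗ dual Y)).inv ≫ (coevr (Y ⊗ X) ▷ (dual X ⊗ dual Y)) ≫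
      (α_ (dual (Y ⊗ X)) (Y ⊗ X) (dual X ⊗ dual Y)).hom ≫
      (dual (Y ⊗ X) ◁ ((α_ Y X (dual X ⊗ dual Y)).hom ≫ (Y ◁ (α_ X (dual X) (dual Y)).inv) ≫
        (Y ◁ (evr X ▷ dual Y)) ≫ (Y ◁ (λ_ (dual Y)).hom) ≫ evr Y)) ≫
      (ρ_ (dual (Y ⊗ X))).hom
  ev_unit : (ρ_ (dual (𝟙_ C))).inv ≫ evl (𝟙_ C) = (λ_ (dual (𝟙_ C))).inv ≫ evr (𝟙_ C)

namespace PivotalCat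

variable {C : Type u} [Category.{v} C] [MonoidalCategory C] [PivotalCat C]

/-- The (common left = right) dual of a morphism. -/
def pdual {X Y : C} (f : X ⟶ Y) : dual Y ⟶ dual X :=
  (ρ_ (dual Y)).inv ≫ (dual Y ◁ coevl X) ≫ (dual Y ◁ (f ▷ dual X)) ≫
    (α_ (dual Y) Y (dual X)).inv ≫ (evl Y ▷ dual X) ≫ (λ_ (dual X)).hom

/-- The (common left = right) pivotal monoidal constraint `X* ⊗ Y* ⟶ (Y ⊗ X)*`. -/
def mcon (X Y : C) : dual X ⊗ dual Y ⟶ dual (Y ⊗ X) :=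
  (ρ_ (dual X ⊗ dual Y)).inv ≫ ((dual X ⊗ dual Y) ◁ coevl (Y ⊗ X)) ≫
    (α_ (dual X) (dual Y) ((Y ⊗ X) ⊗ dual (Y ⊗ X))).hom ≫
    (dual X ◁ (α_ (dual Y) (Y ⊗ X) (dual (Y ⊗ X))).inv) ≫
    (dual X ◁ (((α_ (dual Y) Y X).inv ≫ (evl Y ▷ X) ≫ (λ_ X).hom) ▷ dual (Y ⊗ X))) ≫
    (α_ (dual X) X (dual (Y ⊗ X))).inv ≫ (evl X ▷ dual (Y ⊗ X)) ≫ (λ_ (dual (Y ⊗ X))).hom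

/-- The left trace of an endomorphism. -/
def trl {X : C} (f : X ⟶ X) : 𝟙_ C ⟶ 𝟙_ C := coevr X ≫ (dual X ◁ f) ≫ evl X

/-- The right trace of an endomorphism. -/
def trr {X : C} (f : X ⟶ X) : 𝟙_ C ⟶ 𝟙_ C := coevl X ≫ (f ▷ dual X) ≫ evr X

/-- The left dimension of an object, as an endomorphism of the unit. -/
def diml (X : C) : 𝟙_ C ⟶ 𝟙_ C := trl (𝟙 X)

/-- The right dimension of an object, as an endomorphism of the unit. -/
def dimr (X : C) : 𝟙_ C ⟶ 𝟙_ C := trr (𝟙 X)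

/-- The permutation map `σ_{X,Y} : Hom(𝟙, X ⊗ Y) → Hom(𝟙, Y ⊗ X)`,
`α ↦ (ev_l X ⊗ id_{Y⊗X}) ∘ (id_{X*} ⊗ α ⊗ id_X) ∘ coev_r X`. -/
def sigmaMap (X Y : C) (a : 𝟙_ C ⟶ X ⊗ Y) : 𝟙_ C ⟶ Y ⊗ X :=
  coevr X ≫ (dual X ◁ (λ_ X).inv) ≫ (dual X ◁ (a ▷ X)) ≫ (dual X ◁ (α_ X Y X).hom) ≫
    (α_ (dual X) X (Y ⊗ X)).inv ≫ (evl X ▷ (Y ⊗ X)) ≫ (λ_ (Y ⊗ X)).hom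

end PivotalCat

/-- A pivotal category is spherical when left and right traces coincide. -/
class SphericalCat (C : Type u) [Category.{v} C] [MonoidalCategory C] [PivotalCat C] : Prop where
  tr_eq : ∀ {X : C} (f : X ⟶ X), PivotalCat.trl f = PivotalCat.trr f

namespace PivotalCat

variable {C : Type u} [Category.{v} C] [MonoidalCategory C] [PivotalCat C]

/-- The object `X^ε` associated with a signed object `(X, ε)`:
`X^+ = X` and `X^- = X*`. -/
def sobj : C × Bool → C
  | (X, true) => X
  | (X, false) => dual X

/-- The sign-flip `(X, ε) ↦ (X, -ε)` on signed objects. -/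
def flipSign : C × Bool → C × Bool
  | (X, b) => (X, !b)

/-- The dual tuple `S* = ((X_n, -ε_n), …, (X_1, -ε_1))` of a tuple
`S = ((X_1, ε_1), …, (X_n, ε_n))` of signed objects. -/
def Sstar (S : List (C × Bool)) : List (C × Bool) := (S.map flipSign).reverse

/-- The object `X_S = X_1^{ε_1} ⊗ ⋯ ⊗ X_n^{ε_n}` of a tuple of signed objects. -/
def XS : List (C × Bool) → C
  | [] => 𝟙_ C
  | P :: T => sobj P ⊗ XS T

set_option linter.unusedSectionVars false in
theorem Sstar_cons (P : C × Bool) (T : List (C × Bool)) :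
    Sstar (P :: T) = Sstar T ++ [flipSign P] := by
  simp [Sstar]

set_option linter.unusedSectionVars false in
theorem Sstar_append (S T : List (C × Bool)) :
    Sstar (S ++ T) = Sstar T ++ Sstar S := by
  simp [Sstar]

/-- The identification `X_{AB} = X_A ⊗ X_B` for concatenated tuples. -/
def splitIso : (A B : List (C × Bool)) → (XS (A ++ B) ≅ XS A ⊗ XS B)
  | [], B => (λ_ (XS B)).symm
  | P :: A, B => whiskerLeftIso (sobj P) (splitIso A B) ≪≫ (α_ (sobj P) (XS A) (XS B)).symm

/-- The elementary evaluation `Ev_{(X,+)} = ev_l X`, `Ev_{(X,-)} = ev_r X`. -/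
def ev1 : (P : C × Bool) → (sobj (flipSign P) ⊗ sobj P ⟶ 𝟙_ C)
  | (X, true) => evl X
  | (X, false) => evr X

/-- The evaluation morphism `Ev_S : X_{S*} ⊗ X_S ⟶ 𝟙`, defined recursively by
`Ev_{(X,+)} = ev_l X`, `Ev_{(X,-)} = ev_r X`, and
`Ev_{ST} = Ev_T ∘ (id_{X_{T*}} ⊗ Ev_S ⊗ id_{X_T})`. -/
def EvS : (S : List (C × Bool)) → (XS (Sstar S) ⊗ XS S ⟶ 𝟙_ C)
  | [] => (λ_ (𝟙_ C)).hom
  | P :: T =>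
    ((eqToHom (congrArg XS (Sstar_cons P T)) ≫ (splitIso (Sstar T) [flipSign P]).hom ≫
        (XS (Sstar T) ◁ (ρ_ (sobj (flipSign P))).hom)) ▷ (sobj P ⊗ XS T)) ≫
      (α_ (XS (Sstar T)) (sobj (flipSign P)) (sobj P ⊗ XS T)).hom ≫
      (XS (Sstar T) ◁ (α_ (sobj (flipSign P)) (sobj P) (XS T)).inv) ≫
      (XS (Sstar T) ◁ (ev1 P ▷ XS T)) ≫
      (XS (Sstar T) ◁ (λ_ (XS T)).hom) ≫
      EvS T

/-- The evaluation form `ω_S(α ⊗ β) = Ev_S ∘ (α ⊗ β) ∈ End(𝟙)`. -/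
def omegaS (S : List (C × Bool)) (a : 𝟙_ C ⟶ XS (Sstar S)) (b : 𝟙_ C ⟶ XS S) :
    𝟙_ C ⟶ 𝟙_ C :=
  (λ_ (𝟙_ C)).inv ≫ (a ⊗ₘ b) ≫ EvS S

end PivotalCat


namespace PivotalCat

section Helpers

set_option linter.unusedSectionVars false

variable {C : Type u} [Category.{v} C] [MonoidalCategory C] [PivotalCat C]

theorem lz1 (X : C) : coevl X ▷ X ⊗≫ X ◁ evl X = (λ_ X).hom ≫ (ρ_ X).inv := by
  have h := left_zigzag₁ X
  calc _ = (λ_ X).hom ≫ ((λ_ X).inv ≫ (coevl X ▷ X) ≫ (α_ X (dual X) X).hom ≫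
        (X ◁ evl X) ≫ (ρ_ X).hom) ≫ (ρ_ X).inv := by monoidal
    _ = _ := by rw [h, Category.id_comp]

theorem lz2 (X : C) : dual X ◁ coevl X ⊗≫ evl X ▷ dual X = (ρ_ _).hom ≫ (λ_ _).inv := by
  have h := left_zigzag₂ X
  calc _ = (ρ_ _).hom ≫ ((ρ_ (dual X)).inv ≫ (dual X ◁ coevl X) ≫
        (α_ (dual X) X (dual X)).inv ≫
      (evl X ▷ dual X) ≫ (λ_ (dual X)).hom) ≫ (λ_ _).inv := by monoidal
    _ = _ := by rw [h, Category.id_comp]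

theorem rz1 (X : C) : X ◁ coevr X ⊗≫ evr X ▷ X = (ρ_ _).hom ≫ (λ_ _).inv := by
  have h := right_zigzag₁ X
  calc _ = (ρ_ _).hom ≫ ((ρ_ X).inv ≫ (X ◁ coevr X) ≫ (α_ X (dual X) X).inv ≫
        (evr X ▷ X) ≫ (λ_ X).hom) ≫ (λ_ _).inv := by monoidal
    _ = _ := by rw [h, Category.id_comp]

theorem rz2 (X : C) : coevr X ▷ dual X ⊗≫ dual X ◁ evr X = (λ_ _).hom ≫ (ρ_ _).inv := by
  have h := right_zigzag₂ X
  calc _ = (λ_ _).hom ≫ ((λ_ (dual X)).inv ≫ (coevr X ▷ dual X) ≫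
      (α_ (dual X) X (dual X)).hom ≫
      (dual X ◁ evr X) ≫ (ρ_ (dual X)).hom) ≫ (ρ_ _).inv := by monoidal
    _ = _ := by rw [h, Category.id_comp]

/-- transpose of a pairing, using the left duality -/
def ltrans {D Z : C} (g : D ⊗ Z ⟶ 𝟙_ C) : D ⟶ dual Z :=
  (ρ_ D).inv ≫ D ◁ coevl Z ≫ (α_ _ _ _).inv ≫ g ▷ dual Z ≫ (λ_ _).hom

/-- transpose of a pairing, using the right duality -/
def rtrans {D Z : C} (g : Z ⊗ D ⟶ 𝟙_ C) : D ⟶ dual Z :=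
  (λ_ D).inv ≫ coevr Z ▷ D ≫ (α_ _ _ _).hom ≫ dual Z ◁ g ≫ (ρ_ _).hom

theorem ltrans_evl {D Z : C} (g : D ⊗ Z ⟶ 𝟙_ C) : ltrans g ▷ Z ≫ evl Z = g := by
  unfold ltrans
  calc _ = 𝟙 _ ⊗≫ D ◁ coevl Z ▷ Z ⊗≫ (g ▷ (dual Z ⊗ Z) ≫ _ ◁ evl Z) ⊗≫ 𝟙 _ := by monoidal
    _ = 𝟙 _ ⊗≫ D ◁ (coevl Z ▷ Z ⊗≫ Z ◁ evl Z) ⊗≫ g := by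
        rw [← whisker_exchange]; monoidal
    _ = _ := by rw [lz1]; monoidal

theorem ltrans_mk {D Z : C} (f : D ⟶ dual Z) : ltrans (f ▷ Z ≫ evl Z) = f := by
  unfold ltrans
  calc _ = 𝟙 _ ⊗≫ (D ◁ coevl Z ≫ f ▷ (Z ⊗ dual Z)) ⊗≫ evl Z ▷ dual Z ⊗≫ 𝟙 _ := by monoidal
    _ = 𝟙 _ ⊗≫ f ⊗≫ (dual Z ◁ coevl Z ⊗≫ evl Z ▷ dual Z) ⊗≫ 𝟙 _ := by
        rw [whisker_exchange]; monoidal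
    _ = _ := by rw [lz2]; monoidal

theorem rtrans_evr {D Z : C} (g : Z ⊗ D ⟶ 𝟙_ C) : Z ◁ rtrans g ≫ evr Z = g := by
  unfold rtrans
  calc _ = 𝟙 _ ⊗≫ Z ◁ coevr Z ▷ D ⊗≫ ((Z ⊗ dual Z) ◁ g ≫ evr Z ▷ _) ⊗≫ 𝟙 _ := by monoidal
    _ = 𝟙 _ ⊗≫ (Z ◁ coevr Z ⊗≫ evr Z ▷ Z) ▷ D ⊗≫ g := by
        rw [whisker_exchange]; monoidal
    _ = _ := by rw [rz1]; monoidal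

theorem rtrans_mk {D Z : C} (f : D ⟶ dual Z) : rtrans (Z ◁ f ≫ evr Z) = f := by
  unfold rtrans
  calc _ = 𝟙 _ ⊗≫ (coevr Z ▷ D ≫ (dual Z ⊗ Z) ◁ f) ⊗≫ dual Z ◁ evr Z ⊗≫ 𝟙 _ := by monoidal
    _ = 𝟙 _ ⊗≫ f ⊗≫ (coevr Z ▷ dual Z ⊗≫ dual Z ◁ evr Z) ⊗≫ 𝟙 _ := by
        rw [← whisker_exchange]; monoidal
    _ = _ := by rw [rz2]; monoidal

/-- A pair of pairings compatible with the pivotal structure. -/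
def IsPiv {X X' : C} (e : X' ⊗ X ⟶ 𝟙_ C) (e' : X ⊗ X' ⟶ 𝟙_ C) : Prop :=
  ∃ φ : X' ⟶ dual X, e = φ ▷ X ≫ evl X ∧ e' = X ◁ φ ≫ evr X

theorem isPiv_iff {X X' : C} (e : X' ⊗ X ⟶ 𝟙_ C) (e' : X ⊗ X' ⟶ 𝟙_ C) :
    IsPiv e e' ↔ ltrans e = rtrans e' := by
  constructor
  · rintro ⟨φ, rfl, rfl⟩
    rw [ltrans_mk, rtrans_mk]
  · intro h
    exact ⟨ltrans e, (ltrans_evl e).symm, by rw [h, rtrans_evr]⟩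

theorem IsPiv.precomp {X X' X'' : C} {e : X' ⊗ X ⟶ 𝟙_ C} {e' : X ⊗ X' ⟶ 𝟙_ C}
    (h : IsPiv e e') (g : X'' ⟶ X') : IsPiv (g ▷ X ≫ e) (X ◁ g ≫ e') := by
  obtain ⟨φ, rfl, rfl⟩ := h
  exact ⟨g ≫ φ, by simp, by simp⟩

theorem isPiv_basic (X : C) : IsPiv (evl X) (evr X) := ⟨𝟙 _, by simp, by simp⟩

theorem isPiv_nat_basic {W X : C} (f : W ⟶ X) :
    IsPiv (dual X ◁ f ≫ evl X) (f ▷ dual X ≫ evr X) := by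
  rw [isPiv_iff]
  have h := ldual_eq_rdual f
  unfold ltrans rtrans
  calc _ = _ := by monoidal
    _ = _ := h
    _ = _ := by monoidal

theorem IsPiv.nat {W X X' : C} {e : X' ⊗ X ⟶ 𝟙_ C} {e' : X ⊗ X' ⟶ 𝟙_ C}
    (h : IsPiv e e') (f : W ⟶ X) : IsPiv (X' ◁ f ≫ e) (f ▷ X' ≫ e') := by
  obtain ⟨φ, rfl, rfl⟩ := h
  have := (isPiv_nat_basic f).precomp φ
  rw [whisker_exchange_assoc, ← whisker_exchange_assoc (f := f)]
  exact this

theorem IsPiv.unit {D : C} {u : D ⊗ 𝟙_ C ⟶ 𝟙_ C} {w : 𝟙_ C ⊗ D ⟶ 𝟙_ C}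
    (h : IsPiv u w) : (ρ_ D).inv ≫ u = (λ_ D).inv ≫ w := by
  obtain ⟨φ, rfl, rfl⟩ := h
  have := ev_unit (C := C)
  rw [← rightUnitor_inv_naturality_assoc, ← leftUnitor_inv_naturality_assoc, this]

/-- nested pairing -/
def nest {X X' Y Y' : C} (e : X' ⊗ X ⟶ 𝟙_ C) (d : Y' ⊗ Y ⟶ 𝟙_ C) :
    (Y' ⊗ X') ⊗ (X ⊗ Y) ⟶ 𝟙_ C :=
  (α_ Y' X' (X ⊗ Y)).hom ≫ (Y' ◁ (α_ X' X Y).inv) ≫ (Y' ◁ (e ▷ Y)) ≫ (Y' ◁ (λ_ Y).hom) ≫ d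

theorem isPiv_nest_basic (X Y : C) :
    IsPiv (nest (evl X) (evl Y)) (nest (evr Y) (evr X)) := by
  rw [isPiv_iff]
  have h := constraint_eq Y X
  unfold ltrans rtrans nest
  calc _ = _ := by monoidal
    _ = _ := h
    _ = _ := by monoidal

theorem nest_comp {X X' Y Y' Z W : C} (e : X' ⊗ X ⟶ 𝟙_ C) (d : Y' ⊗ Y ⟶ 𝟙_ C)
    (f : Z ⟶ X') (g : W ⟶ Y') :
    nest (f ▷ X ≫ e) (g ▷ Y ≫ d) = (g ⊗ₘ f) ▷ _ ≫ nest e d := by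
  unfold nest
  calc _ = 𝟙 _ ⊗≫ W ◁ f ▷ X ▷ Y ⊗≫ (W ◁ (e ▷ Y ≫ (λ_ Y).hom) ≫ g ▷ Y) ≫ d := by monoidal
    _ = _ := by rw [whisker_exchange, MonoidalCategory.tensorHom_def']; monoidal

theorem nest_comp' {X X' Y Y' Z W : C} (e : X' ⊗ X ⟶ 𝟙_ C) (d : Y' ⊗ Y ⟶ 𝟙_ C)
    (f : Z ⟶ X) (g : W ⟶ Y) :
    nest (X' ◁ f ≫ e) (Y' ◁ g ≫ d) = _ ◁ (f ⊗ₘ g) ≫ nest e d := by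
  unfold nest
  calc _ = 𝟙 _ ⊗≫ Y' ◁ (X' ◁ f ≫ e) ▷ W ⊗≫ (Y' ◁ g) ≫ d := by monoidal
    _ = 𝟙 _ ⊗≫ Y' ◁ (X' ◁ f) ▷ W ⊗≫ Y' ◁ (e ▷ W ≫ _ ◁ g) ⊗≫ d := by monoidal
    _ = _ := by rw [← whisker_exchange, MonoidalCategory.tensorHom_def]; monoidal

theorem IsPiv.nest {X X' Y Y' : C} {e : X' ⊗ X ⟶ 𝟙_ C} {e' : X ⊗ X' ⟶ 𝟙_ C}
    {d : Y' ⊗ Y ⟶ 𝟙_ C} {d' : Y ⊗ Y' ⟶ 𝟙_ C} (h : IsPiv e e') (k : IsPiv d d') :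
    IsPiv (nest e d) (nest d' e') := by
  obtain ⟨φ, rfl, rfl⟩ := h
  obtain ⟨ψ, rfl, rfl⟩ := k
  rw [nest_comp, nest_comp']
  exact (isPiv_nest_basic X Y).precomp (ψ ⊗ₘ φ)

theorem isPiv_symm_basic (X : C) : IsPiv (evr X) (evl X) := by
  have h := ((isPiv_nest_basic X (dual X)).nat (coevl X)).unit
  have h1 : evl (dual X) = (λ_ _).inv ≫ coevl X ▷ _ ≫ nest (evr (dual X)) (evr X) := by
    rw [← h]
    symm
    unfold PivotalCat.nest
    calc _ = 𝟙 _ ⊗≫ dual (dual X) ◁ (dual X ◁ coevl X ⊗≫ evl X ▷ dual X) ⊗≫ evl (dual X) := by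
          monoidal
      _ = _ := by rw [lz2]; monoidal
  refine ⟨rtrans (evl X), ?_, (rtrans_evr _).symm⟩
  rw [h1]
  symm
  unfold PivotalCat.nest
  calc _ = 𝟙 _ ⊗≫ (_ ◁ (rtrans (evl X) ▷ dual X) ≫ coevl X ▷ (dual (dual X) ⊗ dual X)) ⊗≫
        X ◁ evr (dual X) ▷ dual X ⊗≫ evr X := by monoidal
    _ = 𝟙 _ ⊗≫ coevl X ▷ (X ⊗ dual X) ⊗≫ X ◁ (dual X ◁ rtrans (evl X) ≫ evr (dual X)) ▷ dual X ⊗≫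
        evr X := by rw [whisker_exchange]; monoidal
    _ = 𝟙 _ ⊗≫ (coevl X ▷ X ⊗≫ X ◁ evl X) ▷ dual X ⊗≫ evr X := by
        rw [rtrans_evr]; monoidal
    _ = _ := by rw [lz1]; monoidal

theorem IsPiv.symm {X X' : C} {e : X' ⊗ X ⟶ 𝟙_ C} {e' : X ⊗ X' ⟶ 𝟙_ C}
    (h : IsPiv e e') : IsPiv e' e := by
  obtain ⟨φ, rfl, rfl⟩ := h
  exact (isPiv_symm_basic X).nat φ

theorem isPiv_unit : IsPiv (λ_ (𝟙_ C)).hom (λ_ (𝟙_ C)).hom := by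
  refine ⟨ltrans (λ_ (𝟙_ C)).hom, (ltrans_evl _).symm, ?_⟩
  have h := congrArg (fun t => ltrans (λ_ (𝟙_ C)).hom ≫ t) (ev_unit (C := C))
  simp only [rightUnitor_inv_naturality_assoc, leftUnitor_inv_naturality_assoc,
    ltrans_evl] at h
  rw [← cancel_epi (λ_ (𝟙_ C)).inv, ← h, unitors_inv_equal]

theorem IsPiv.flip {X X' : C} {e : X' ⊗ X ⟶ 𝟙_ C} {e' : X ⊗ X' ⟶ 𝟙_ C}
    (h : IsPiv e e') (a : 𝟙_ C ⟶ X') (b : 𝟙_ C ⟶ X) :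
    (a ⊗ₘ b) ≫ e = (b ⊗ₘ a) ≫ e' := by
  have h1 := congrArg (fun t => a ≫ t) (h.nat b).unit
  simp only [rightUnitor_inv_naturality_assoc, leftUnitor_inv_naturality_assoc] at h1
  rw [← unitors_inv_equal, cancel_epi] at h1
  rw [MonoidalCategory.tensorHom_def, MonoidalCategory.tensorHom_def', Category.assoc, Category.assoc, h1]

theorem sigma_comp {X Y : C} (b : 𝟙_ C ⟶ X ⊗ Y) (c : Y ⊗ X ⟶ 𝟙_ C) :
    sigmaMap X Y b ≫ c =
      trl ((λ_ X).inv ≫ b ▷ X ≫ (α_ _ _ _).hom ≫ X ◁ c ≫ (ρ_ X).hom) := by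
  unfold sigmaMap trl
  calc _ = coevr X ≫ (dual X ◁ (λ_ X).inv) ≫ (dual X ◁ (b ▷ X)) ≫ (dual X ◁ (α_ X Y X).hom) ≫
    (α_ (dual X) X (Y ⊗ X)).inv ≫ (evl X ▷ (Y ⊗ X) ≫ _ ◁ c) ≫ (λ_ _).hom := by monoidal
    _ = _ := by rw [← whisker_exchange]; monoidal

theorem trr_comp {X Y : C} (b : 𝟙_ C ⟶ X ⊗ Y) (c : Y ⊗ X ⟶ 𝟙_ C) :
    trr ((λ_ X).inv ≫ b ▷ X ≫ (α_ _ _ _).hom ≫ X ◁ c ≫ (ρ_ X).hom) =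
      b ≫ X ◁ ltrans c ≫ evr X := by
  unfold trr ltrans
  calc _ = 𝟙 _ ⊗≫ (_ ◁ coevl X ≫ b ▷ _) ⊗≫ X ◁ c ▷ dual X ⊗≫ evr X := by monoidal
    _ = _ := by rw [whisker_exchange]; monoidal

theorem sigma_pair {X' Y Y' : C} {d : Y' ⊗ Y ⟶ 𝟙_ C} {d' : Y ⊗ Y' ⟶ 𝟙_ C} (k : IsPiv d d')
    (a : 𝟙_ C ⟶ Y' ⊗ X') :
    (λ_ Y).inv ≫ sigmaMap Y' X' a ▷ Y ≫ (α_ _ _ _).hom ≫ X' ◁ d ≫ (ρ_ _).hom =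
      (ρ_ Y).inv ≫ Y ◁ a ≫ (α_ _ _ _).inv ≫ d' ▷ X' ≫ (λ_ _).hom := by
  obtain ⟨ψ, rfl, rfl⟩ := k.symm
  unfold sigmaMap
  calc _ = 𝟙 _ ⊗≫ coevr Y' ▷ Y ⊗≫ dual Y' ◁ a ▷ (Y' ⊗ Y) ⊗≫
          ((evl Y' ▷ X') ▷ (Y' ⊗ Y) ≫ _ ◁ (Y' ◁ ψ ≫ evr Y')) ⊗≫ 𝟙 _ := by monoidal
    _ = 𝟙 _ ⊗≫ coevr Y' ▷ Y ⊗≫ dual Y' ◁ (a ▷ (Y' ⊗ Y) ≫ _ ◁ (Y' ◁ ψ ≫ evr Y')) ⊗≫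
          evl Y' ▷ X' ⊗≫ 𝟙 _ := by rw [← whisker_exchange]; monoidal
    _ = 𝟙 _ ⊗≫ (coevr Y' ▷ Y ≫ _ ◁ ψ) ⊗≫ dual Y' ◁ evr Y' ⊗≫ dual Y' ◁ a ⊗≫
          evl Y' ▷ X' ⊗≫ 𝟙 _ := by rw [← whisker_exchange]; monoidal
    _ = 𝟙 _ ⊗≫ ψ ⊗≫ (coevr Y' ▷ dual Y' ⊗≫ dual Y' ◁ evr Y') ⊗≫ dual Y' ◁ a ⊗≫
          evl Y' ▷ X' ⊗≫ 𝟙 _ := by rw [← whisker_exchange]; monoidal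
    _ = 𝟙 _ ⊗≫ (ψ ▷ _ ≫ dual Y' ◁ a) ⊗≫ evl Y' ▷ X' ⊗≫ 𝟙 _ := by rw [rz2]; monoidal
    _ = _ := by rw [← whisker_exchange]; monoidal

theorem cyclic_abs [SphericalCat C] {X X' Y Y' : C} {e : X' ⊗ X ⟶ 𝟙_ C} {e' : X ⊗ X' ⟶ 𝟙_ C}
    {d : Y' ⊗ Y ⟶ 𝟙_ C} {d' : Y ⊗ Y' ⟶ 𝟙_ C} (h : IsPiv e e') (k : IsPiv d d')
    (a : 𝟙_ C ⟶ Y' ⊗ X') (b : 𝟙_ C ⟶ X ⊗ Y) :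
    (sigmaMap Y' X' a ⊗ₘ sigmaMap X Y b) ≫ nest d e = (a ⊗ₘ b) ≫ nest e d := by
  rw [(h.nest k).flip a b, ← cancel_epi (λ_ (𝟙_ C)).inv]
  have hc : (λ_ (𝟙_ C)).inv ≫ (sigmaMap Y' X' a ⊗ₘ sigmaMap X Y b) ≫ nest d e =
      sigmaMap X Y b ≫ ((λ_ _).inv ≫ sigmaMap Y' X' a ▷ (Y ⊗ X) ≫ nest d e) := by
    rw [MonoidalCategory.tensorHom_def']; simp
  rw [hc, sigma_comp, SphericalCat.tr_eq, trr_comp]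
  obtain ⟨φ, rfl, rfl⟩ := h
  have hq : ltrans ((λ_ _).inv ≫ sigmaMap Y' X' a ▷ (Y ⊗ X) ≫ nest d (φ ▷ X ≫ evl X)) =
      ((λ_ Y).inv ≫ sigmaMap Y' X' a ▷ Y ≫ (α_ _ _ _).hom ≫ X' ◁ d ≫ (ρ_ _).hom) ≫ φ := by
    rw [← ltrans_mk (_ ≫ φ)]
    congr 1
    unfold PivotalCat.nest
    calc _ = 𝟙 _ ⊗≫ sigmaMap Y' X' a ▷ Y ▷ X ⊗≫ X' ◁ d ▷ X ⊗≫ φ ▷ X ≫ evl X := by monoidal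
      _ = _ := by monoidal
  rw [hq, sigma_pair k]
  unfold PivotalCat.nest
  rw [MonoidalCategory.tensorHom_def]
  monoidal

theorem ev1_piv (P : C × Bool) : ∃ e', IsPiv (ev1 P) e' := by
  obtain ⟨X, _ | _⟩ := P
  · exact ⟨_, isPiv_symm_basic X⟩
  · exact ⟨_, isPiv_basic X⟩

theorem EvS_cons (P : C × Bool) (T : List (C × Bool)) :
    EvS (P :: T) = (eqToHom (congrArg XS (Sstar_cons P T)) ≫
      (splitIso (Sstar T) [flipSign P]).hom ≫
        (XS (Sstar T) ◁ (ρ_ (sobj (flipSign P))).hom)) ▷ (sobj P ⊗ XS T) ≫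
      nest (ev1 P) (EvS T) := rfl

theorem EvS_piv (S : List (C × Bool)) : ∃ e', IsPiv (EvS S) e' := by
  induction S with
  | nil => exact ⟨_, isPiv_unit⟩
  | cons P T ih =>
    obtain ⟨e', he⟩ := ih
    obtain ⟨d', hd⟩ := ev1_piv P
    rw [EvS_cons]
    exact ⟨_, (hd.nest he).precomp _⟩

theorem eqToHom_XS_cons (P : C × Bool) {A B : List (C × Bool)} (h : A = B)
    (h' : XS (P :: A) = XS (P :: B)) :
    eqToHom h' = sobj P ◁ eqToHom (congrArg XS h) := by
  subst h
  exact (MonoidalCategory.whiskerLeft_id _ _).symm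

theorem splitIso_cons (P : C × Bool) (A B : List (C × Bool)) :
    (splitIso (P :: A) B).hom = sobj P ◁ (splitIso A B).hom ≫ (α_ (sobj P) (XS A) (XS B)).inv :=
  rfl

theorem abs_nil_cons (P : C) {X A : C} (k : X ⟶ A) (s : X ⟶ A ⊗ 𝟙_ C)
    (h : s = k ≫ (ρ_ A).inv) (k' : P ⊗ X ⟶ P ⊗ A) (hk : k' = P ◁ k) :
    P ◁ s ≫ (α_ _ _ _).inv = k' ≫ (ρ_ (P ⊗ A)).inv := by
  subst h hk
  monoidal

theorem splitIso_nil (A : List (C × Bool)) :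
    (splitIso A []).hom = eqToHom (congrArg XS (List.append_nil A)) ≫ (ρ_ (XS A)).inv := by
  induction A with
  | nil =>
    have : (splitIso ([] : List (C × Bool)) []).hom = (λ_ (𝟙_ C)).inv := rfl
    rw [this, unitors_inv_equal]
    exact (Category.id_comp _).symm
  | cons P A ih =>
    exact abs_nil_cons (sobj P) _ _ ih _
      (eqToHom_XS_cons P (List.append_nil A) (congrArg XS (List.append_nil (P :: A))))

theorem abs_assoc_nil {X B D : C} (s : X ⟶ B ⊗ D) :
    s ≫ (λ_ B).inv ▷ D ≫ (α_ _ _ _).hom = 𝟙 X ≫ (λ_ X).inv ≫ 𝟙_ C ◁ s := by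
  monoidal

theorem abs_assoc_cons (P : C) {X Y A B D E F : C} (s1 : X ⟶ Y ⊗ D) (s2 : Y ⟶ A ⊗ B)
    (k : X ⟶ E) (s3 : E ⟶ A ⊗ F) (s4 : F ⟶ B ⊗ D)
    (h : s1 ≫ s2 ▷ D ≫ (α_ _ _ _).hom = k ≫ s3 ≫ A ◁ s4)
    (k' : P ⊗ X ⟶ P ⊗ E) (hk : k' = P ◁ k) :
    (P ◁ s1 ≫ (α_ _ _ _).inv) ≫ (P ◁ s2 ≫ (α_ _ _ _).inv) ▷ D ≫ (α_ _ _ _).hom =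
      k' ≫ (P ◁ s3 ≫ (α_ _ _ _).inv) ≫ (P ⊗ A) ◁ s4 := by
  subst hk
  have h' := congrArg (fun t => P ◁ t ≫ (α_ P A (B ⊗ D)).inv) h
  refine Eq.trans ?_ (h'.trans ?_)
  · monoidal
  · monoidal

theorem splitIso_assoc (A B D : List (C × Bool)) :
    (splitIso (A ++ B) D).hom ≫ (splitIso A B).hom ▷ XS D ≫ (α_ _ _ _).hom =
      eqToHom (congrArg XS (List.append_assoc A B D)) ≫
        (splitIso A (B ++ D)).hom ≫ XS A ◁ (splitIso B D).hom := by
  induction A with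
  | nil => exact abs_assoc_nil (splitIso B D).hom
  | cons P A ih =>
    exact abs_assoc_cons (sobj P) _ _ _ _ _ ih _
      (eqToHom_XS_cons P (List.append_assoc A B D)
        (congrArg XS (List.append_assoc (P :: A) B D)))

theorem nest_assoc {P P' S S' T T' : C} (p : P' ⊗ P ⟶ 𝟙_ C) (s : S' ⊗ S ⟶ 𝟙_ C)
    (t : T' ⊗ T ⟶ 𝟙_ C) :
    nest p (nest s t) = (α_ _ _ _).hom ▷ _ ≫ _ ◁ (α_ _ _ _).inv ≫ nest (nest p s) t := by
  unfold nest
  monoidal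

theorem abs_star {X Y A B p E F : C} (s1 : X ⟶ Y ⊗ (p ⊗ 𝟙_ C)) (s2 : Y ⟶ A ⊗ B)
    (k : X ⟶ E) (s3 : E ⟶ A ⊗ F) (s4 : F ⟶ B ⊗ (p ⊗ 𝟙_ C))
    (h : s1 ≫ s2 ▷ (p ⊗ 𝟙_ C) ≫ (α_ _ _ _).hom = k ≫ s3 ≫ A ◁ s4) :
    (𝟙 _ ≫ s1 ≫ Y ◁ (ρ_ p).hom) ≫ (𝟙 _ ≫ s2) ▷ p ≫ (α_ _ _ _).hom =
      (k ≫ s3) ≫ A ◁ (𝟙 _ ≫ s4 ≫ B ◁ (ρ_ p).hom) := by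
  have h' := congrArg (fun t => t ≫ A ◁ B ◁ (ρ_ p).hom) h
  calc _ = 𝟙 _ ≫ s1 ≫ (Y ◁ (ρ_ p).hom ≫ s2 ▷ p) ≫ (α_ _ _ _).hom := by monoidal
    _ = (s1 ≫ s2 ▷ (p ⊗ 𝟙_ C) ≫ (α_ _ _ _).hom) ≫ A ◁ B ◁ (ρ_ p).hom := by
      rw [whisker_exchange]; monoidal
    _ = _ := h'
    _ = _ := by monoidal

theorem star_step (p : C × Bool) {A B L M N : List (C × Bool)} (hL : L = A ++ B)
    (hM : M = B ++ [p]) (hN : N = L ++ [p]) (hN' : N = A ++ M) :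
    (eqToHom (congrArg XS hN) ≫ (splitIso L [p]).hom ≫ (XS L ◁ (ρ_ (sobj p)).hom)) ≫
      (eqToHom (congrArg XS hL) ≫ (splitIso A B).hom) ▷ sobj p ≫ (α_ _ _ _).hom =
    (eqToHom (congrArg XS hN') ≫ (splitIso A M).hom) ≫
      XS A ◁ (eqToHom (congrArg XS hM) ≫ (splitIso B [p]).hom ≫ (XS B ◁ (ρ_ (sobj p)).hom)) := by
  subst hL hM hN
  exact abs_star _ _ _ _ _ (splitIso_assoc A B [p])

theorem abs_append_nil {T X M : C} (t : X ⊗ T ⟶ 𝟙_ C) (j : X ⟶ M) (k : M ⟶ X)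
    (h : j ≫ k = 𝟙 _) (s : M ⟶ X ⊗ 𝟙_ C) (hs : s = k ≫ (ρ_ X).inv) :
    t = (j ≫ s) ▷ T ≫ _ ◁ (λ_ T).inv ≫ nest (λ_ (𝟙_ C)).hom t := by
  subst hs
  rw [← Category.assoc j, h]
  unfold nest
  monoidal

theorem abs_append_cons {N L p A B M P S T ST : C} (x : N ⟶ L ⊗ p) (y : L ⟶ A ⊗ B)
    (z : N ⟶ A ⊗ M) (w : M ⟶ B ⊗ p) (hx : x ≫ y ▷ p ≫ (α_ _ _ _).hom = z ≫ A ◁ w)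
    (σ : ST ⟶ S ⊗ T) (e : p ⊗ P ⟶ 𝟙_ C) (s : B ⊗ S ⟶ 𝟙_ C) (t : A ⊗ T ⟶ 𝟙_ C)
    (st : L ⊗ ST ⟶ 𝟙_ C) (hst : st = y ▷ ST ≫ _ ◁ σ ≫ nest s t) :
    x ▷ (P ⊗ ST) ≫ nest e st =
      z ▷ (P ⊗ ST) ≫ _ ◁ (P ◁ σ ≫ (α_ _ _ _).inv) ≫ nest (w ▷ (P ⊗ S) ≫ nest e s) t := by
  subst hst
  have h1 := nest_comp e ((A ⊗ B) ◁ σ ≫ nest s t) (𝟙 p) y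
  have h2 := nest_comp' e (nest s t) (𝟙 P) σ
  have h3 := nest_comp (nest e s) t w (𝟙 A)
  simp only [id_whiskerRight, MonoidalCategory.whiskerLeft_id, Category.id_comp,
    id_tensorHom, tensorHom_id] at h1 h2 h3
  rw [h1, h2, h3, nest_assoc]
  calc _ = x ▷ (P ⊗ ST) ≫ y ▷ p ▷ (P ⊗ ST) ≫ (_ ◁ (P ◁ σ ≫ (α_ _ _ _).inv) ≫
        (α_ A B p).hom ▷ _) ≫ nest (nest e s) t := by
        rw [whisker_exchange, MonoidalCategory.whiskerLeft_comp]
        simp only [Category.assoc]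
        rw [whisker_exchange_assoc]
    _ = (x ≫ y ▷ p ≫ (α_ _ _ _).hom) ▷ (P ⊗ ST) ≫ _ ◁ (P ◁ σ ≫ (α_ _ _ _).inv) ≫
        nest (nest e s) t := by
        rw [whisker_exchange]; simp only [comp_whiskerRight, Category.assoc]
    _ = (z ≫ A ◁ w) ▷ (P ⊗ ST) ≫ _ ◁ (P ◁ σ ≫ (α_ _ _ _).inv) ≫ nest (nest e s) t := by
        rw [hx]
    _ = _ := by
        rw [comp_whiskerRight, Category.assoc, ← whisker_exchange_assoc]

theorem EvS_append (S T : List (C × Bool)) :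
    EvS (S ++ T) = (eqToHom (congrArg XS (Sstar_append S T)) ≫
      (splitIso (Sstar T) (Sstar S)).hom) ▷ _ ≫ _ ◁ (splitIso S T).hom ≫
        nest (EvS S) (EvS T) := by
  induction S with
  | nil =>
    exact abs_append_nil (EvS T) (eqToHom (congrArg XS (Sstar_append [] T)))
      (eqToHom (congrArg XS (List.append_nil (Sstar T)))) (by simp)
      _ (splitIso_nil (Sstar T))
  | cons P S ih =>
    exact abs_append_cons _ _ _ _ (star_step (flipSign P) (Sstar_append S T) (Sstar_cons P S)
      (Sstar_cons P (S ++ T)) (Sstar_append (P :: S) T)) (splitIso S T).hom (ev1 P) (EvS S)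
      (EvS T) _ ih

theorem omega_append (S T : List (C × Bool)) (a : 𝟙_ C ⟶ XS (Sstar T) ⊗ XS (Sstar S))
    (b : 𝟙_ C ⟶ XS S ⊗ XS T) :
    omegaS (S ++ T)
      (a ≫ (splitIso (Sstar T) (Sstar S)).inv ≫
        eqToHom (congrArg XS (Sstar_append S T)).symm)
      (b ≫ (splitIso S T).inv) = (λ_ (𝟙_ C)).inv ≫ (a ⊗ₘ b) ≫ nest (EvS S) (EvS T) := by
  unfold omegaS
  rw [EvS_append]
  congr 1
  rw [← tensorHom_id, ← id_tensorHom]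
  simp only [MonoidalCategory.tensorHom_comp_tensorHom_assoc]
  simp

end Helpers

end PivotalCat

open PivotalCat in
/-- Lemma 2.2: in a spherical pivotal category, for all tuples `S`, `T` of signed objects,
`ω_{TS} ∘ (σ_{X_{T*}, X_{S*}} ⊗ σ_{X_S, X_T}) = ω_{ST}`, under the identifications
`X_{(ST)*} = X_{T*} ⊗ X_{S*}` and `X_{ST} = X_S ⊗ X_T`. -/
theorem spherical_omega_cyclic {C : Type u} [Category.{v} C] [MonoidalCategory C]
    [PivotalCat C] [SphericalCat C] (S T : List (C × Bool))
    (a : 𝟙_ C ⟶ XS (Sstar T) ⊗ XS (Sstar S)) (b : 𝟙_ C ⟶ XS S ⊗ XS T) :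
    omegaS (T ++ S)
      (sigmaMap (XS (Sstar T)) (XS (Sstar S)) a ≫ (splitIso (Sstar S) (Sstar T)).inv ≫
        eqToHom (congrArg XS (Sstar_append T S)).symm)
      (sigmaMap (XS S) (XS T) b ≫ (splitIso T S).inv) =
    omegaS (S ++ T)
      (a ≫ (splitIso (Sstar T) (Sstar S)).inv ≫
        eqToHom (congrArg XS (Sstar_append S T)).symm)
      (b ≫ (splitIso S T).inv) := by
  obtain ⟨e', he⟩ := EvS_piv S
  obtain ⟨d', hd⟩ := EvS_piv T
  rw [omega_append, omega_append, cyclic_abs he hd]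
end

section
/- Let C be a non-degenerate pivotal k-category (k a commutative ring). Then for every tuple S of signed objects of C, the evaluation form ω_S : Hom(𝟙, X_{S*}) ⊗ Hom(𝟙, X_S) → k is non-degenerate. -/
open CategoryTheory CategoryTheory.Limits MonoidalCategory

universe v u w

/-- An object `X` of a `k`-linear category is simple if `λ ↦ λ • id_X` is a bijection
`k → End X`. -/
def IsSimpleObj (k : Type w) [CommRing k] {C : Type u} [Category.{v} C]
    [Preadditive C] [CategoryTheory.Linear k C] (X : C) : Prop :=
  Function.Bijective fun a : k => a • 𝟙 X

/-- A monoidal `k`-category: the hom-sets are `k`-modules, composition and the monoidal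
product are `k`-bilinear (all this is encoded in the instance parameters), and
`End(𝟙)` is free of rank one via `λ ↦ λ • id`. -/
class MonoidalKCat (k : Type w) [CommRing k] (C : Type u) [Category.{v} C]
    [Preadditive C] [CategoryTheory.Linear k C] [MonoidalCategory C]
    [MonoidalPreadditive C] [CategoryTheory.MonoidalLinear k C] : Prop where
  unit_free : Function.Bijective fun a : k => a • 𝟙 (𝟙_ C)

/-- The identification `End(𝟙) = k` of a monoidal `k`-category. -/
noncomputable def toScalar (k : Type w) [CommRing k] {C : Type u} [Category.{v} C]
    [Preadditive C] [CategoryTheory.Linear k C] [MonoidalCategory C]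
    [MonoidalPreadditive C] [CategoryTheory.MonoidalLinear k C] [MonoidalKCat k C]
    (f : 𝟙_ C ⟶ 𝟙_ C) : k :=
  (Equiv.ofBijective (fun a : k => a • 𝟙 (𝟙_ C))
    (MonoidalKCat.unit_free (k := k) (C := C))).symm f

/-- The left dimension of an object as an element of `k`. -/
noncomputable def sdiml (k : Type w) [CommRing k] {C : Type u} [Category.{v} C]
    [Preadditive C] [CategoryTheory.Linear k C] [MonoidalCategory C]
    [MonoidalPreadditive C] [CategoryTheory.MonoidalLinear k C] [PivotalCat C]
    [MonoidalKCat k C] (X : C) : k :=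
  toScalar k (PivotalCat.diml X)

/-- The right dimension of an object as an element of `k`. -/
noncomputable def sdimr (k : Type w) [CommRing k] {C : Type u} [Category.{v} C]
    [Preadditive C] [CategoryTheory.Linear k C] [MonoidalCategory C]
    [MonoidalPreadditive C] [CategoryTheory.MonoidalLinear k C] [PivotalCat C]
    [MonoidalKCat k C] (X : C) : k :=
  toScalar k (PivotalCat.dimr X)

/-- A pre-fusion category over `k`: a pivotal `k`-category in which every finite family of
objects has a direct sum, every object is a finite direct sum of simple objects, and there
are no nonzero morphisms between non-isomorphic simple objects. -/
class PreFusionCat (k : Type w) [CommRing k] (C : Type u) [Category.{v} C]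
    [Preadditive C] [CategoryTheory.Linear k C] [MonoidalCategory C]
    [MonoidalPreadditive C] [CategoryTheory.MonoidalLinear k C]
    [CategoryTheory.Limits.HasFiniteBiproducts C] [PivotalCat C] [MonoidalKCat k C] : Prop where
  semisimple : ∀ X : C, ∃ (n : ℕ) (obj : Fin n → C) (p : ∀ a, X ⟶ obj a) (q : ∀ a, obj a ⟶ X),
    (∀ a, IsSimpleObj k (obj a)) ∧ (∑ a, p a ≫ q a = 𝟙 X) ∧
    (∀ a, q a ≫ p a = 𝟙 (obj a)) ∧ (∀ a b, a ≠ b → q a ≫ p b = 0)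
  simple_hom_zero : ∀ {i j : C}, IsSimpleObj k i → IsSimpleObj k j →
    IsEmpty (i ≅ j) → ∀ f : i ⟶ j, f = 0

/-- A fusion category over `k`: a pre-fusion category with finitely many isomorphism
classes of simple objects. -/
class FusionCat (k : Type w) [CommRing k] (C : Type u) [Category.{v} C]
    [Preadditive C] [CategoryTheory.Linear k C] [MonoidalCategory C]
    [MonoidalPreadditive C] [CategoryTheory.MonoidalLinear k C]
    [CategoryTheory.Limits.HasFiniteBiproducts C] [PivotalCat C] [MonoidalKCat k C]
    [PreFusionCat k C] : Prop where
  finitely_many_simples : ∃ S : Set C, S.Finite ∧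
    ∀ i : C, IsSimpleObj k i → ∃ j ∈ S, Nonempty (i ≅ j)

/-- A representative set of simple objects: it contains the unit object, consists of simple
objects, and every simple object is isomorphic to exactly one of its elements. -/
def IsRepresentativeSet (k : Type w) [CommRing k] (C : Type u) [Category.{v} C]
    [Preadditive C] [CategoryTheory.Linear k C] [MonoidalCategory C] (I : Set C) : Prop :=
  (𝟙_ C) ∈ I ∧ (∀ i ∈ I, IsSimpleObj k i) ∧
    ∀ X : C, IsSimpleObj k X → ∃! i, i ∈ I ∧ Nonempty (X ≅ i)

/-- The dimension of a fusion category with (finite) representative set `I` of simple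
objects: `dim C = ∑_{i ∈ I} dim_l(i) · dim_r(i)`. -/
noncomputable def catDim (k : Type w) [CommRing k] {C : Type u} [Category.{v} C]
    [Preadditive C] [CategoryTheory.Linear k C] [MonoidalCategory C]
    [MonoidalPreadditive C] [CategoryTheory.MonoidalLinear k C] [PivotalCat C]
    [MonoidalKCat k C] (I : Finset C) : k :=
  ∑ i ∈ I, sdiml k i * sdimr k i

/-- A pairing `ω : M × N → k` of `k`-modules is non-degenerate if it admits an inverse
copairing: finite families `(a_i)` in `N` and `(b_i)` in `M` (representing an element
`Ω(1) = ∑ a_i ⊗ b_i` of `N ⊗ M`) such that `(id_N ⊗ ω)(Ω ⊗ id_N) = id_N` and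
`(ω ⊗ id_M)(id_M ⊗ Ω) = id_M`. -/
def IsNondegeneratePairing (k : Type w) [CommRing k] {M N : Type*}
    [AddCommMonoid M] [Module k M] [AddCommMonoid N] [Module k N]
    (ω : M → N → k) : Prop :=
  ∃ (n : ℕ) (a : Fin n → N) (b : Fin n → M),
    (∀ y : N, ∑ i, ω (b i) y • a i = y) ∧ (∀ x : M, ∑ i, ω x (a i) • b i = x)

/-- The evaluation pairing `ω_X : Hom(𝟙, X*) × Hom(𝟙, X) → k`,
`(α, β) ↦ ev_l X ∘ (α ⊗ β)`. -/
noncomputable def omegaX (k : Type w) [CommRing k] {C : Type u} [Category.{v} C]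
    [Preadditive C] [CategoryTheory.Linear k C] [MonoidalCategory C]
    [MonoidalPreadditive C] [CategoryTheory.MonoidalLinear k C] [PivotalCat C]
    [MonoidalKCat k C] (X : C) :
    (𝟙_ C ⟶ PivotalCat.dual X) → (𝟙_ C ⟶ X) → k :=
  fun a b => toScalar k ((λ_ (𝟙_ C)).inv ≫ (a ⊗ₘ b) ≫ PivotalCat.evl X)

/-- A pivotal `k`-category is non-degenerate if for every object `X` the pairing
`ω_X : Hom(𝟙, X*) × Hom(𝟙, X) → k` is non-degenerate. -/
def NondegeneratePivotal (k : Type w) [CommRing k] (C : Type u) [Category.{v} C]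
    [Preadditive C] [CategoryTheory.Linear k C] [MonoidalCategory C]
    [MonoidalPreadditive C] [CategoryTheory.MonoidalLinear k C] [PivotalCat C]
    [MonoidalKCat k C] : Prop :=
  ∀ X : C, IsNondegeneratePairing k (omegaX k X)

section Aux
open PivotalCat
variable {C : Type u} [Category.{v} C] [MonoidalCategory C]

theorem aux_zigzag {A B : C} (e : A ⊗ B ⟶ 𝟙_ C) (c : 𝟙_ C ⟶ B ⊗ A)
    (h₁ : (λ_ B).inv ≫ (c ▷ B) ≫ (α_ B A B).hom ≫ (B ◁ e) ≫ (ρ_ B).hom = 𝟙 B)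
    (h₂ : (ρ_ A).inv ≫ (A ◁ c) ≫ (α_ A B A).inv ≫ (e ▷ A) ≫ (λ_ A).hom = 𝟙 A)
    (Y Z : C) :
    Function.Bijective (fun f : Y ⟶ Z ⊗ A =>
      f ▷ B ≫ (α_ Z A B).hom ≫ Z ◁ e ≫ (ρ_ Z).hom) := by
  let inst : ExactPairing B A :=
    { coevaluation' := c
      evaluation' := e
      coevaluation_evaluation' := by
        have := congrArg (fun t => (ρ_ A).hom ≫ t ≫ (λ_ A).inv) h₂
        simpa using this
      evaluation_coevaluation' := by
        have := congrArg (fun t => (λ_ B).hom ≫ t ≫ (ρ_ B).inv) h₁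
        simpa using this }
  exact (tensorRightHomEquiv Y B A Z).symm.bijective

variable [PivotalCat C]

theorem aux_ev1 (P : C × Bool) (Y Z : C) :
    Function.Bijective (fun f : Y ⟶ Z ⊗ sobj (flipSign P) =>
      f ▷ sobj P ≫ (α_ Z (sobj (flipSign P)) (sobj P)).hom ≫ Z ◁ ev1 P ≫ (ρ_ Z).hom) := by
  obtain ⟨X, b⟩ := P
  cases b
  · exact aux_zigzag (evr X) (coevr X) (right_zigzag₂ X) (right_zigzag₁ X) Y Z
  · exact aux_zigzag (evl X) (coevl X) (left_zigzag₁ X) (left_zigzag₂ X) Y Z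

theorem aux_evl (X Y : C) :
    Function.Bijective (fun f : Y ⟶ dual X => f ▷ X ≫ evl X) := by
  have h := aux_zigzag (evl X) (coevl X) (left_zigzag₁ X) (left_zigzag₂ X) Y (𝟙_ C)
  have h2 := h.comp ((Iso.homCongr (Iso.refl Y) (λ_ (dual X)).symm).bijective)
  convert h2 using 2 with f
  simp [← unitors_equal]

theorem aux_EvS (S : List (C × Bool)) (Y : C) :
    Function.Bijective (fun f : Y ⟶ XS (Sstar S) => f ▷ XS S ≫ EvS S) := by
  induction S generalizing Y with
  | nil =>
    have h2 := (Iso.homCongr (ρ_ Y).symm (Iso.refl (𝟙_ C))).bijective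
    change Function.Bijective
      (fun f : Y ⟶ 𝟙_ C => f ▷ 𝟙_ C ≫ (λ_ (𝟙_ C)).hom)
    convert h2 using 2 with f
    simp [unitors_equal]
  | cons P T ih =>
    let i : XS (Sstar (P :: T)) ≅ XS (Sstar T) ⊗ sobj (flipSign P) :=
      eqToIso (congrArg XS (Sstar_cons P T)) ≪≫ splitIso (Sstar T) [flipSign P] ≪≫
        whiskerLeftIso (XS (Sstar T)) (ρ_ (sobj (flipSign P)))
    have h1 := (Iso.homCongr (Iso.refl Y) i).bijective
    have h4 := (Iso.homCongr (α_ Y (sobj P) (XS T)) (Iso.refl (𝟙_ C))).bijective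
    have h := h4.comp ((ih (Y ⊗ sobj P)).comp ((aux_ev1 P Y (XS (Sstar T))).comp h1))
    change Function.Bijective (fun f : Y ⟶ XS (Sstar (P :: T)) => f ▷ (sobj P ⊗ XS T) ≫
      i.hom ▷ (sobj P ⊗ XS T) ≫
      (α_ (XS (Sstar T)) (sobj (flipSign P)) (sobj P ⊗ XS T)).hom ≫
      (XS (Sstar T) ◁ (α_ (sobj (flipSign P)) (sobj P) (XS T)).inv) ≫
      (XS (Sstar T) ◁ (ev1 P ▷ XS T)) ≫
      (XS (Sstar T) ◁ (λ_ (XS T)).hom) ≫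
      EvS T)
    convert h using 2 with f
    clear_value i
    simp

theorem aux_iso (S : List (C × Bool)) :
    ∃ φ : XS (Sstar S) ≅ dual (XS S), φ.hom ▷ XS S ≫ evl (XS S) = EvS S := by
  obtain ⟨p, hp⟩ := (aux_evl (XS S) (XS (Sstar S))).2 (EvS S)
  obtain ⟨q, hq⟩ := (aux_EvS S (dual (XS S))).2 (evl (XS S))
  dsimp only at hp hq
  refine ⟨⟨p, q, ?_, ?_⟩, hp⟩
  · apply (aux_EvS S _).1
    simp [hp, hq]
  · apply (aux_evl (XS S) _).1
    simp [hp, hq]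

end Aux

open PivotalCat in
/-- Lemma 2.3: in a non-degenerate pivotal `k`-category, the evaluation form
`ω_S : Hom(𝟙, X_{S*}) × Hom(𝟙, X_S) → k` is non-degenerate for every tuple `S` of
signed objects. -/
theorem nondegenerate_omegaS (k : Type w) [CommRing k] (C : Type u) [Category.{v} C]
    [Preadditive C] [CategoryTheory.Linear k C] [MonoidalCategory C]
    [MonoidalPreadditive C] [CategoryTheory.MonoidalLinear k C] [PivotalCat C]
    [MonoidalKCat k C] (hnd : NondegeneratePivotal k C) (S : List (C × Bool)) :
    IsNondegeneratePairing k
      (fun (a : 𝟙_ C ⟶ XS (Sstar S)) (b : 𝟙_ C ⟶ XS S) => toScalar k (omegaS S a b)) := by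
  obtain ⟨φ, hφ⟩ := aux_iso S
  obtain ⟨n, a, b, h₁, h₂⟩ := hnd (XS S)
  have key : ∀ (x : 𝟙_ C ⟶ XS (Sstar S)) (y : 𝟙_ C ⟶ XS S),
      toScalar k (omegaS S x y) = omegaX k (XS S) (x ≫ φ.hom) y := by
    intro x y
    simp only [omegaS, omegaX, ← hφ, MonoidalCategory.tensorHom_def', comp_whiskerRight,
      Category.assoc]
  refine ⟨n, a, fun i => b i ≫ φ.inv, fun y => ?_, fun x => ?_⟩
  · simpa [key] using h₁ y
  · have := congrArg (fun t => t ≫ φ.inv) (h₂ (x ≫ φ.hom))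
    simpa [key, Preadditive.sum_comp] using this
end

section
/- Let C be a pivotal category. For all objects X, Y, Z of C: (a) σ_{X,Y} : Hom(𝟙, X⊗Y) → Hom(𝟙, Y⊗X) is a bijection with inverse σ_{Y,X}; (b) σ_{X,𝟙} = σ_{𝟙,X} = id on Hom(𝟙, X); (c) σ_{X⊗Y,Z} = σ_{Y,Z⊗X} ∘ σ_{X,Y⊗Z} and σ_{X,Y⊗Z} = σ_{Z⊗X,Y} ∘ σ_{X⊗Y,Z}. -/
open CategoryTheory CategoryTheory.Limits MonoidalCategory

universe v u w

namespace PivotalCat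

variable {C : Type u} [Category.{v} C] [MonoidalCategory C] [PivotalCat C]

/-- Mate of a left pairing. -/
def lmate {D W : C} (e : D ⊗ W ⟶ 𝟙_ C) : D ⟶ dual W :=
  (ρ_ D).inv ≫ (D ◁ coevl W) ≫ (α_ D W (dual W)).inv ≫ (e ▷ dual W) ≫ (λ_ (dual W)).hom

/-- Mate of a right pairing. -/
def rmate {D W : C} (e : W ⊗ D ⟶ 𝟙_ C) : D ⟶ dual W :=
  (λ_ D).inv ≫ (coevr W ▷ D) ≫ (α_ (dual W) W D).hom ≫ (dual W ◁ e) ≫ (ρ_ (dual W)).hom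

theorem lmate_evl {D W : C} (e : D ⊗ W ⟶ 𝟙_ C) : (lmate e ▷ W) ≫ evl W = e := by
  unfold lmate
  calc _ = 𝟙 _ ⊗≫ D ◁ coevl W ▷ W ⊗≫ (e ▷ (dual W ⊗ W) ≫ 𝟙_ C ◁ evl W) ⊗≫ 𝟙 _ := by monoidal
    _ = 𝟙 _ ⊗≫ D ◁ ((λ_ W).inv ≫ (coevl W ▷ W) ≫ (α_ W (dual W) W).hom ≫ (W ◁ evl W) ≫
          (ρ_ W).hom) ⊗≫ e := by
        rw [← whisker_exchange]; monoidal
    _ = e := by rw [left_zigzag₁]; monoidal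

theorem coev_rmate {D W : C} (e : W ⊗ D ⟶ 𝟙_ C) (c : 𝟙_ C ⟶ D ⊗ W)
    (h : (ρ_ W).inv ≫ (W ◁ c) ≫ (α_ W D W).inv ≫ (e ▷ W) ≫ (λ_ W).hom = 𝟙 W) :
    c ≫ (rmate e ▷ W) = coevr W := by
  unfold rmate
  calc _ = 𝟙 _ ⊗≫ (𝟙_ C ◁ c ≫ coevr W ▷ (D ⊗ W)) ⊗≫ dual W ◁ e ▷ W ⊗≫ 𝟙 _ := by monoidal
    _ = coevr W ⊗≫ dual W ◁ ((ρ_ W).inv ≫ (W ◁ c) ≫ (α_ W D W).inv ≫ (e ▷ W) ≫ (λ_ W).hom)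
          ⊗≫ 𝟙 _ := by
        rw [whisker_exchange]; monoidal
    _ = _ := by rw [h]; monoidal

theorem sigma_gen {D W Z : C} (m : D ⟶ dual W) (a : 𝟙_ C ⟶ W ⊗ Z) (c : 𝟙_ C ⟶ D ⊗ W)
    (e : D ⊗ W ⟶ 𝟙_ C) (hc : c ≫ (m ▷ W) = coevr W) (he : (m ▷ W) ≫ evl W = e) :
    sigmaMap W Z a = c ⊗≫ D ◁ a ▷ W ⊗≫ e ▷ (Z ⊗ W) ⊗≫ 𝟙 _ := by
  unfold sigmaMap
  rw [← hc, ← he]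
  calc _ = c ⊗≫ (m ▷ (𝟙_ C ⊗ W) ≫ dual W ◁ (a ▷ W)) ⊗≫ evl W ▷ (Z ⊗ W) ⊗≫ 𝟙 _ := by monoidal
    _ = _ := by rw [← whisker_exchange]; monoidal

/-- Nested left evaluation. -/
def nevl (X Y : C) : (dual Y ⊗ dual X) ⊗ (X ⊗ Y) ⟶ 𝟙_ C :=
  𝟙 _ ⊗≫ dual Y ◁ evl X ▷ Y ⊗≫ evl Y
/-- Nested right evaluation. -/
def nevr (X Y : C) : (X ⊗ Y) ⊗ (dual Y ⊗ dual X) ⟶ 𝟙_ C :=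
  𝟙 _ ⊗≫ X ◁ evr Y ▷ dual X ⊗≫ evr X
/-- Nested right coevaluation. -/
def ncoevr (X Y : C) : 𝟙_ C ⟶ (dual Y ⊗ dual X) ⊗ (X ⊗ Y) :=
  coevr Y ⊗≫ dual Y ◁ coevr X ▷ Y ⊗≫ 𝟙 _

theorem mates_eq (X Y : C) : lmate (nevl X Y) = rmate (nevr X Y) := by
  have h := constraint_eq Y X
  unfold lmate rmate nevl nevr
  refine Eq.trans ?_ (h.trans ?_)
  · monoidal
  · monoidal

theorem nested_zigzag (X Y : C) :
    (ρ_ (X ⊗ Y)).inv ≫ ((X ⊗ Y) ◁ ncoevr X Y) ≫ (α_ _ _ _).inv ≫ (nevr X Y ▷ (X ⊗ Y)) ≫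
      (λ_ (X ⊗ Y)).hom = 𝟙 (X ⊗ Y) := by
  unfold ncoevr nevr
  calc _ = 𝟙 _ ⊗≫ X ◁ Y ◁ coevr Y ⊗≫ X ◁ ((Y ⊗ dual Y) ◁ coevr X ≫ evr Y ▷ (dual X ⊗ X)) ▷ Y
          ⊗≫ evr X ▷ X ▷ Y ⊗≫ 𝟙 _ := by monoidal
    _ = 𝟙 _ ⊗≫ X ◁ ((ρ_ Y).inv ≫ (Y ◁ coevr Y) ≫ (α_ Y (dual Y) Y).inv ≫ (evr Y ▷ Y) ≫ (λ_ Y).hom)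
        ⊗≫ ((ρ_ X).inv ≫ (X ◁ coevr X) ≫ (α_ X (dual X) X).inv ≫ (evr X ▷ X) ≫ (λ_ X).hom) ▷ Y
          ⊗≫ 𝟙 _ := by
        rw [whisker_exchange]
        monoidal
    _ = _ := by rw [right_zigzag₁, right_zigzag₁]; monoidal

theorem sigma_tensor (X Y Z : C) (a : 𝟙_ C ⟶ (X ⊗ Y) ⊗ Z) :
      sigmaMap (X ⊗ Y) Z a =
        sigmaMap Y (Z ⊗ X) (sigmaMap X (Y ⊗ Z) (a ≫ (α_ X Y Z).hom) ≫ (α_ Y Z X).hom) ≫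
          (α_ Z X Y).hom := by
  rw [sigma_gen (lmate (nevl X Y)) a (ncoevr X Y) (nevl X Y)
    (by rw [mates_eq]; exact coev_rmate _ _ (nested_zigzag X Y)) (lmate_evl _)]
  unfold sigmaMap ncoevr nevl
  monoidal

theorem unit_l : coevl (𝟙_ C) ≫ (λ_ _).hom ≫ (ρ_ _).inv ≫ evl (𝟙_ C) = 𝟙 _ := by
  rw [← left_zigzag₁ (𝟙_ C)]; monoidal

theorem unit_r : coevr (𝟙_ C) ≫ (ρ_ _).hom ≫ (λ_ _).inv ≫ evr (𝟙_ C) = 𝟙 _ := by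
  rw [← right_zigzag₁ (𝟙_ C)]; monoidal

theorem state_eq {X : C} (a : 𝟙_ C ⟶ X) :
    (ρ_ (dual X)).inv ≫ dual X ◁ a ≫ evl X = (λ_ (dual X)).inv ≫ a ▷ dual X ≫ evr X := by
  have h := congrArg (fun f => f ≫ (ρ_ (dual (𝟙_ C))).inv ≫ evl (𝟙_ C)) (ldual_eq_rdual a)
  refine Eq.trans ?_ (h.trans ?_)
  · skip
    symm
    calc _ = 𝟙 _ ⊗≫ dual X ◁ coevl (𝟙_ C) ⊗≫ dual X ◁ a ▷ dual (𝟙_ C) ⊗≫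
            (evl X ▷ (dual (𝟙_ C) ⊗ 𝟙_ C) ≫ 𝟙_ C ◁ evl (𝟙_ C)) ⊗≫ 𝟙 _ := by monoidal
      _ = 𝟙 _ ⊗≫ dual X ◁ coevl (𝟙_ C) ⊗≫ dual X ◁ (a ▷ (dual (𝟙_ C) ⊗ 𝟙_ C) ≫ 
            X ◁ evl (𝟙_ C)) ⊗≫ evl X ⊗≫ 𝟙 _ := by rw [← whisker_exchange]; monoidal
      _ = 𝟙 _ ⊗≫ dual X ◁ (coevl (𝟙_ C) ≫ (λ_ _).hom ≫ (ρ_ _).inv ≫ evl (𝟙_ C)) ⊗≫ dual X ◁ a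
             ⊗≫ evl X := by rw [← whisker_exchange]; monoidal
      _ = _ := by rw [unit_l]; monoidal
  · skip
    rw [ev_unit]
    calc _ = 𝟙 _ ⊗≫ coevr (𝟙_ C) ▷ dual X ⊗≫ dual (𝟙_ C) ◁ a ▷ dual X ⊗≫
            ((𝟙_ C ⊗ dual (𝟙_ C)) ◁ evr X ≫ evr (𝟙_ C) ▷ 𝟙_ C) ⊗≫ 𝟙 _ := by monoidal
      _ = 𝟙 _ ⊗≫ coevr (𝟙_ C) ▷ dual X ⊗≫ ((𝟙_ C ⊗ dual (𝟙_ C)) ◁ a ≫ 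
            evr (𝟙_ C) ▷ X) ▷ dual X ⊗≫ evr X ⊗≫ 𝟙 _ := by rw [whisker_exchange]; monoidal
      _ = 𝟙 _ ⊗≫ (coevr (𝟙_ C) ≫ (ρ_ _).hom ≫ (λ_ _).inv ≫ evr (𝟙_ C)) ▷ dual X ⊗≫ a ▷ dual X
             ⊗≫ evr X := by rw [whisker_exchange]; monoidal
      _ = _ := by rw [unit_r]; monoidal

theorem sigma_one (X : C) (a : 𝟙_ C ⟶ X ⊗ 𝟙_ C) :
    sigmaMap X (𝟙_ C) a = a ≫ (ρ_ X).hom ≫ (λ_ X).inv := by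
  obtain ⟨b, rfl⟩ : ∃ b : 𝟙_ C ⟶ X, a = b ≫ (ρ_ X).inv := ⟨a ≫ (ρ_ X).hom, by simp⟩
  unfold sigmaMap
  calc _ = coevr X ≫ ((ρ_ (dual X)).inv ≫ dual X ◁ b ≫ evl X) ▷ X := by monoidal
    _ = 𝟙 _ ⊗≫ (𝟙_ C ◁ coevr X ≫ b ▷ (dual X ⊗ X)) ⊗≫ evr X ▷ X := by
        rw [state_eq]; monoidal
    _ = 𝟙 _ ⊗≫ b ⊗≫ ((ρ_ X).inv ≫ (X ◁ coevr X) ≫ (α_ X (dual X) X).inv ≫ (evr X ▷ X) ≫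
         (λ_ X).hom) ⊗≫ 𝟙 _ := by rw [whisker_exchange]; monoidal
    _ = _ := by rw [right_zigzag₁]; monoidal

theorem sigma_nat {X Y Y' : C} (a : 𝟙_ C ⟶ X ⊗ Y) (f : Y ⟶ Y') :
    sigmaMap X Y' (a ≫ X ◁ f) = sigmaMap X Y a ≫ f ▷ X := by
  unfold sigmaMap
  calc _ = coevr X ⊗≫ dual X ◁ a ▷ X ⊗≫ ((dual X ⊗ X) ◁ (f ▷ X) ≫ evl X ▷ (Y' ⊗ X)) ⊗≫ 𝟙 _ := by
        monoidal
    _ = _ := by rw [whisker_exchange]; monoidal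

theorem sigma_sigma (X Y : C) (a : 𝟙_ C ⟶ X ⊗ Y) : sigmaMap Y X (sigmaMap X Y a) = a := by
  have h := sigma_tensor X Y (𝟙_ C) (a ≫ (ρ_ _).inv)
  have h1 : (a ≫ (ρ_ (X ⊗ Y)).inv) ≫ (α_ X Y (𝟙_ C)).hom = a ≫ X ◁ (ρ_ Y).inv := by monoidal
  rw [sigma_one, h1, sigma_nat] at h
  have h2 : (sigmaMap X Y a ≫ (ρ_ Y).inv ▷ X) ≫ (α_ Y (𝟙_ C) X).hom =
    sigmaMap X Y a ≫ Y ◁ (λ_ X).inv := by monoidal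
  rw [h2, sigma_nat] at h
  have h3 := congrArg (fun f => f ≫ (λ_ _).hom) h
  simp at h3
  exact h3.symm

theorem sigma_one' (X : C) (a : 𝟙_ C ⟶ 𝟙_ C ⊗ X) :
    sigmaMap (𝟙_ C) X a = a ≫ (λ_ X).hom ≫ (ρ_ X).inv := by
  have h := sigma_sigma X (𝟙_ C) (a ≫ (λ_ X).hom ≫ (ρ_ X).inv)
  rw [sigma_one] at h
  simpa using h

theorem sigma_nat' {X X' Y : C} (a : 𝟙_ C ⟶ X ⊗ Y) (f : X ⟶ X') :
    sigmaMap X' Y (a ≫ f ▷ Y) = sigmaMap X Y a ≫ Y ◁ f := by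
  have h := sigma_nat (sigmaMap X Y a) f
  rw [sigma_sigma] at h
  rw [← h, sigma_sigma]

theorem sigma_tensor' (X Y Z : C) (a : 𝟙_ C ⟶ X ⊗ (Y ⊗ Z)) :
      sigmaMap X (Y ⊗ Z) a =
        sigmaMap (Z ⊗ X) Y (sigmaMap (X ⊗ Y) Z (a ≫ (α_ X Y Z).inv) ≫ (α_ Z X Y).inv) ≫
          (α_ Y Z X).inv := by
  rw [sigma_tensor Z X Y]
  simp [sigma_sigma]

end PivotalCat

open PivotalCat in
/-- Lemma 2.1 (properties of the permutation maps `σ_{X,Y}`):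
(a) `σ_{X,Y}` is a bijection with inverse `σ_{Y,X}`;
(b) `σ_{X,𝟙} = σ_{𝟙,X} = id` (under the unitor identifications);
(c) `σ_{X⊗Y,Z} = σ_{Y,Z⊗X} ∘ σ_{X,Y⊗Z}` and `σ_{X,Y⊗Z} = σ_{Z⊗X,Y} ∘ σ_{X⊗Y,Z}`
(under the associator identifications). -/
theorem sigmaMap_permutation_properties {C : Type u} [Category.{v} C] [MonoidalCategory C]
    [PivotalCat C] (X Y Z : C) :
    (∀ a : 𝟙_ C ⟶ X ⊗ Y, sigmaMap Y X (sigmaMap X Y a) = a) ∧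
    (∀ a : 𝟙_ C ⟶ Y ⊗ X, sigmaMap X Y (sigmaMap Y X a) = a) ∧
    (∀ a : 𝟙_ C ⟶ X ⊗ 𝟙_ C, sigmaMap X (𝟙_ C) a = a ≫ (ρ_ X).hom ≫ (λ_ X).inv) ∧
    (∀ a : 𝟙_ C ⟶ 𝟙_ C ⊗ X, sigmaMap (𝟙_ C) X a = a ≫ (λ_ X).hom ≫ (ρ_ X).inv) ∧
    (∀ a : 𝟙_ C ⟶ (X ⊗ Y) ⊗ Z,
      sigmaMap (X ⊗ Y) Z a =
        sigmaMap Y (Z ⊗ X) (sigmaMap X (Y ⊗ Z) (a ≫ (α_ X Y Z).hom) ≫ (α_ Y Z X).hom) ≫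
          (α_ Z X Y).hom) ∧
    (∀ a : 𝟙_ C ⟶ X ⊗ (Y ⊗ Z),
      sigmaMap X (Y ⊗ Z) a =
        sigmaMap (Z ⊗ X) Y (sigmaMap (X ⊗ Y) Z (a ≫ (α_ X Y Z).inv) ≫ (α_ Z X Y).inv) ≫
          (α_ Y Z X).inv) := by
  exact ⟨sigma_sigma X Y, sigma_sigma Y X, sigma_one X, sigma_one' X, sigma_tensor X Y Z,
    sigma_tensor' X Y Z⟩
end

section
/- Let C be a pivotal category. For all objects X, Y of C and every α ∈ Hom(𝟙, X⊗Y): σ_{X,Y}(α) = (id_{Y⊗X} ⊗ ev_r(Y))(id_Y ⊗ α ⊗ id_{Y*})coev_l(Y). -/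
open CategoryTheory CategoryTheory.Limits MonoidalCategory

universe v u w

section PivHelpers
open PivotalCat
variable {C : Type u} [Category.{v} C] [MonoidalCategory C] [PivotalCat C]

def pivLC {W Z : C} (g : W ⊗ Z ⟶ 𝟙_ C) : W ⟶ dual Z :=
  (ρ_ W).inv ≫ (W ◁ coevl Z) ≫ (α_ W Z (dual Z)).inv ≫ (g ▷ dual Z) ≫ (λ_ (dual Z)).hom

def pivRC {W Z : C} (h : Z ⊗ W ⟶ 𝟙_ C) : W ⟶ dual Z :=
  (λ_ W).inv ≫ (coevr Z ▷ W) ≫ (α_ (dual Z) Z W).hom ≫ (dual Z ◁ h) ≫ (ρ_ (dual Z)).hom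

theorem pivLC_ev {W Z : C} (g : W ⊗ Z ⟶ 𝟙_ C) : pivLC g ▷ Z ≫ evl Z = g := by
  calc _ = 𝟙 _ ⊗≫ W ◁ coevl Z ▷ Z ⊗≫ (g ▷ (dual Z ⊗ Z) ≫ 𝟙_ C ◁ evl Z) ⊗≫ 𝟙 _ := by
        unfold pivLC; monoidal
    _ = 𝟙 _ ⊗≫ W ◁ ((λ_ Z).inv ≫ (coevl Z ▷ Z) ≫ (α_ Z (dual Z) Z).hom ≫ (Z ◁ evl Z) ≫
          (ρ_ Z).hom) ⊗≫ g := by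
        rw [← whisker_exchange]; monoidal
    _ = g := by rw [left_zigzag₁]; monoidal

theorem pivRC_ev {W Z : C} (h : Z ⊗ W ⟶ 𝟙_ C) : Z ◁ pivRC h ≫ evr Z = h := by
  calc _ = 𝟙 _ ⊗≫ Z ◁ coevr Z ▷ W ⊗≫ ((Z ⊗ dual Z) ◁ h ≫ evr Z ▷ 𝟙_ C) ⊗≫ 𝟙 _ := by
        unfold pivRC; monoidal
    _ = 𝟙 _ ⊗≫ ((ρ_ Z).inv ≫ (Z ◁ coevr Z) ≫ (α_ Z (dual Z) Z).inv ≫ (evr Z ▷ Z) ≫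
          (λ_ Z).hom) ▷ W ⊗≫ h := by
        rw [whisker_exchange]; monoidal
    _ = h := by rw [right_zigzag₁]; monoidal

theorem piv_dual_eq {X Y : C} (f : X ⟶ Y) :
    pivLC (dual Y ◁ f ≫ evl Y) = pivRC (f ▷ dual Y ≫ evr Y) := by
  have h := ldual_eq_rdual f
  unfold pivLC pivRC
  calc _ = _ := by simp
    _ = _ := h
    _ = _ := by simp

theorem piv_unit {Z : C} (a : 𝟙_ C ⟶ Z) :
    (ρ_ _).inv ≫ dual Z ◁ a ≫ evl Z = (λ_ _).inv ≫ a ▷ dual Z ≫ evr Z := by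
  rw [← pivLC_ev (dual Z ◁ a ≫ evl Z), ← pivRC_ev (a ▷ dual Z ≫ evr Z), piv_dual_eq,
    ← rightUnitor_inv_naturality_assoc, ev_unit, leftUnitor_inv_naturality_assoc]

def pivEL (X Y : C) : (dual X ⊗ dual Y) ⊗ (Y ⊗ X) ⟶ 𝟙_ C :=
  (α_ _ _ _).hom ≫ dual X ◁ ((α_ (dual Y) Y X).inv ≫ (evl Y ▷ X) ≫ (λ_ X).hom) ≫ evl X

def pivER (X Y : C) : (Y ⊗ X) ⊗ (dual X ⊗ dual Y) ⟶ 𝟙_ C :=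
  (α_ Y X (dual X ⊗ dual Y)).hom ≫ (Y ◁ (α_ X (dual X) (dual Y)).inv) ≫
        (Y ◁ (evr X ▷ dual Y)) ≫ (Y ◁ (λ_ (dual Y)).hom) ≫ evr Y

theorem piv_con (X Y : C) : pivLC (pivEL X Y) = pivRC (pivER X Y) := by
  have h := constraint_eq X Y
  unfold pivRC pivER
  rw [← h]
  unfold pivLC pivEL
  monoidal

theorem piv_pair {Z W : C} (a : 𝟙_ C ⟶ Z) (g : W ⊗ Z ⟶ 𝟙_ C) (h : Z ⊗ W ⟶ 𝟙_ C)
    (e : pivLC g = pivRC h) : (ρ_ _).inv ≫ W ◁ a ≫ g = (λ_ _).inv ≫ a ▷ W ≫ h := by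
  rw [← pivLC_ev g, ← pivRC_ev h, ← e, whisker_exchange_assoc, ← whisker_exchange_assoc a (pivLC g),
    ← rightUnitor_inv_naturality_assoc, piv_unit, leftUnitor_inv_naturality_assoc]

def pivU {X Y : C} (a : 𝟙_ C ⟶ X ⊗ Y) : dual X ⟶ Y :=
  (ρ_ _).inv ≫ dual X ◁ a ≫ (α_ _ _ _).inv ≫ evl X ▷ Y ≫ (λ_ _).hom

def pivV {X Y : C} (a : 𝟙_ C ⟶ X ⊗ Y) : dual Y ⟶ X :=
  (λ_ _).inv ≫ a ▷ dual Y ≫ (α_ _ _ _).hom ≫ X ◁ evr Y ≫ (ρ_ _).hom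

theorem piv_UV {X Y : C} (a : 𝟙_ C ⟶ X ⊗ Y) :
    dual Y ◁ pivU a ≫ evl Y = pivV a ▷ dual X ≫ evr X := by
  have h := piv_pair a _ _ (piv_con Y X)
  calc _ = (ρ_ _).inv ≫ (dual Y ⊗ dual X) ◁ a ≫ pivEL Y X := by
        unfold pivU pivEL; monoidal
    _ = _ := h
    _ = _ := by unfold pivV pivER; monoidal

theorem piv_U {X Y : C} (u : X ⟶ Y) :
    u = (λ_ _).inv ≫ coevl Y ▷ X ≫ (α_ _ _ _).hom ≫ Y ◁ (dual Y ◁ u ≫ evl Y) ≫ (ρ_ _).hom := by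
  symm
  calc _ = 𝟙 _ ⊗≫ (coevl Y ▷ X ≫ (Y ⊗ dual Y) ◁ u) ⊗≫ Y ◁ evl Y ⊗≫ 𝟙 _ := by monoidal
    _ = u ≫ ((λ_ Y).inv ≫ (coevl Y ▷ Y) ≫ (α_ Y (dual Y) Y).hom ≫ (Y ◁ evl Y) ≫
          (ρ_ Y).hom) := by rw [← whisker_exchange]; monoidal
    _ = u := by rw [left_zigzag₁]; simp

theorem piv_V {X Y : C} (u : Y ⟶ X) :
    u = (ρ_ _).inv ≫ Y ◁ coevr X ≫ (α_ _ _ _).inv ≫ (u ▷ dual X ≫ evr X) ▷ X ≫ (λ_ _).hom := by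
  symm
  calc _ = 𝟙 _ ⊗≫ (Y ◁ coevr X ≫ u ▷ (dual X ⊗ X)) ⊗≫ evr X ▷ X ⊗≫ 𝟙 _ := by monoidal
    _ = u ≫ ((ρ_ X).inv ≫ (X ◁ coevr X) ≫ (α_ X (dual X) X).inv ≫ (evr X ▷ X) ≫
          (λ_ X).hom) := by rw [whisker_exchange]; monoidal
    _ = u := by rw [right_zigzag₁]; simp

theorem piv_rot {X Y : C} (u : dual X ⟶ Y) (w : dual Y ⟶ X)
    (e : dual Y ◁ u ≫ evl Y = w ▷ dual X ≫ evr X) :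
    coevr X ≫ u ▷ X = coevl Y ≫ Y ◁ w := by
  rw [piv_U u, piv_V w, e]
  generalize w ▷ dual X ≫ evr X = p
  calc _ = 𝟙 _ ⊗≫ (𝟙_ C ◁ coevr X ≫ coevl Y ▷ (dual X ⊗ X)) ⊗≫ Y ◁ p ▷ X ⊗≫ 𝟙 _ := by monoidal
    _ = _ := by rw [whisker_exchange]; monoidal

end PivHelpers

open PivotalCat in
/-- Formula (2.2): the permutation map `σ_{X,Y}` can also be computed as
`σ_{X,Y}(α) = (id_{Y⊗X} ⊗ ev_r Y) ∘ (id_Y ⊗ α ⊗ id_{Y*}) ∘ coev_l Y`. -/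
theorem sigmaMap_eq_right_formula {C : Type u} [Category.{v} C] [MonoidalCategory C]
    [PivotalCat C] (X Y : C) (a : 𝟙_ C ⟶ X ⊗ Y) :
    sigmaMap X Y a =
      coevl Y ≫ (Y ◁ (λ_ (dual Y)).inv) ≫ (Y ◁ (a ▷ dual Y)) ≫
        (Y ◁ (α_ X Y (dual Y)).hom) ≫ (α_ Y X (Y ⊗ dual Y)).inv ≫
        ((Y ⊗ X) ◁ evr Y) ≫ (ρ_ (Y ⊗ X)).hom := by
  calc sigmaMap X Y a = coevr X ≫ pivU a ▷ X := by unfold sigmaMap pivU; monoidal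
    _ = coevl Y ≫ Y ◁ pivV a := piv_rot _ _ (piv_UV a)
    _ = _ := by unfold pivV; monoidal
end

section
/- Let C be a pivotal category. The maps σ are natural: for all morphisms f : X → X' and g : Y → Y' in C and every α ∈ Hom(𝟙, X⊗Y): (g ⊗ f) ∘ σ_{X,Y}(α) = σ_{X',Y'}((f ⊗ g) ∘ α). -/
open CategoryTheory CategoryTheory.Limits MonoidalCategory

universe v u w

namespace PivotalCat

variable {C : Type u} [Category.{v} C] [MonoidalCategory C] [PivotalCat C]

/-- The left duality as an exact pairing. -/
@[reducible] def leftPair (X : C) : ExactPairing X (dual X) where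
  coevaluation' := coevl X
  evaluation' := evl X
  coevaluation_evaluation' := by
    have h := left_zigzag₂ X
    rw [Iso.inv_comp_eq] at h
    simp only [← Category.assoc] at h ⊢
    rw [← Iso.eq_comp_inv] at h
    simpa using h
  evaluation_coevaluation' := by
    have h := left_zigzag₁ X
    rw [Iso.inv_comp_eq] at h
    simp only [← Category.assoc] at h ⊢
    rw [← Iso.eq_comp_inv] at h
    simpa using h

/-- The right duality as an exact pairing. -/
@[reducible] def rightPair (X : C) : ExactPairing (dual X) X where
  coevaluation' := coevr X
  evaluation' := evr X
  coevaluation_evaluation' := by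
    have h := right_zigzag₁ X
    rw [Iso.inv_comp_eq] at h
    simp only [← Category.assoc] at h ⊢
    rw [← Iso.eq_comp_inv] at h
    simpa using h
  evaluation_coevaluation' := by
    have h := right_zigzag₂ X
    rw [Iso.inv_comp_eq] at h
    simp only [← Category.assoc] at h ⊢
    rw [← Iso.eq_comp_inv] at h
    simpa using h

theorem pdual_evl {X Y : C} (f : X ⟶ Y) :
    pdual f ▷ X ≫ evl X = dual Y ◁ f ≫ evl Y :=
  @rightAdjointMate_comp_evaluation C _ _ X Y
    (@HasRightDual.mk C _ _ X (dual X) (leftPair X))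
    (@HasRightDual.mk C _ _ Y (dual Y) (leftPair Y)) f

theorem coevr_pdual {X Y : C} (f : X ⟶ Y) :
    coevr Y ≫ pdual f ▷ Y = coevr X ≫ dual X ◁ f := by
  rw [pdual, ldual_eq_rdual]
  exact @coevaluation_comp_leftAdjointMate C _ _ X Y
    (@HasLeftDual.mk C _ _ X (dual X) (rightPair X))
    (@HasLeftDual.mk C _ _ Y (dual Y) (rightPair Y)) f

end PivotalCat

open PivotalCat in
/-- Naturality of the permutation maps: for `f : X ⟶ X'`, `g : Y ⟶ Y'` and
`α : 𝟙 ⟶ X ⊗ Y`, one has `(g ⊗ f) ∘ σ_{X,Y}(α) = σ_{X',Y'}((f ⊗ g) ∘ α)`. -/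
theorem sigmaMap_natural {C : Type u} [Category.{v} C] [MonoidalCategory C] [PivotalCat C]
    {X X' Y Y' : C} (f : X ⟶ X') (g : Y ⟶ Y') (a : 𝟙_ C ⟶ X ⊗ Y) :
    sigmaMap X Y a ≫ (g ⊗ₘ f) = sigmaMap X' Y' (a ≫ (f ⊗ₘ g)) := by
  have key : sigmaMap X' Y' (a ≫ (f ⊗ₘ g)) =
      coevr X' ≫ (dual X' ◁ ((λ_ X').inv ≫ ((a ≫ X ◁ g) ▷ X') ≫ (α_ X Y' X').hom)) ≫
        (α_ (dual X') X (Y' ⊗ X')).inv ≫ ((dual X' ◁ f ≫ evl X') ▷ (Y' ⊗ X')) ≫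
          (λ_ (Y' ⊗ X')).hom := by
    rw [sigmaMap, tensorHom_def']
    monoidal
  have key2 : coevr X' ≫ (dual X' ◁ ((λ_ X').inv ≫ ((a ≫ X ◁ g) ▷ X') ≫ (α_ X Y' X').hom)) ≫
        (α_ (dual X') X (Y' ⊗ X')).inv ≫ ((pdual f ▷ X ≫ evl X) ▷ (Y' ⊗ X')) ≫
          (λ_ (Y' ⊗ X')).hom =
      (coevr X' ≫ pdual f ▷ X') ≫
        (dual X ◁ ((λ_ X').inv ≫ ((a ≫ X ◁ g) ▷ X') ≫ (α_ X Y' X').hom)) ≫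
        (α_ (dual X) X (Y' ⊗ X')).inv ≫ (evl X ▷ (Y' ⊗ X')) ≫ (λ_ (Y' ⊗ X')).hom := by
    rw [Category.assoc, ← whisker_exchange_assoc]
    monoidal
  have key3 : dual X ◁ f ≫
        (dual X ◁ ((λ_ X').inv ≫ ((a ≫ X ◁ g) ▷ X') ≫ (α_ X Y' X').hom)) =
      (dual X ◁ ((λ_ X).inv ≫ (a ▷ X) ≫ (α_ X Y X).hom)) ≫ dual X ◁ X ◁ (g ⊗ₘ f) := by
    rw [← whiskerLeft_comp, ← whiskerLeft_comp]
    congr 1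
    rw [leftUnitor_inv_naturality_assoc, whisker_exchange_assoc, MonoidalCategory.tensorHom_def]
    monoidal
  rw [key, ← pdual_evl, key2, coevr_pdual, Category.assoc, reassoc_of% key3, sigmaMap]
  rw [associator_inv_naturality_right_assoc, whisker_exchange_assoc, leftUnitor_naturality]
  simp only [Category.assoc, whiskerLeft_comp]
end
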